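/- Let G be an infinite discrete semigroup of cardinality η that is weakly cancellative and right cancellative. Then there exists a family (x_i)_{i∈I} of non-principal ultrafilters in βG ∖ G, indexed by a set I of cardinality 2^(2^η), such that the principal left ideals βG·x_i = {p·x_i : p ∈ βG} are pairwise disjoint: (βG·x_i) ∩ (βG·x_j) = ∅ whenever i ≠ j. -/

import Mathlib

/-!
STATEMENT 13.  `G` an infinite discrete semigroup of cardinality `η`, weakly
cancellative and right cancellative.  There is a family `(x_i)_{i ∈ I}` of
non-principal ultrafilters in `βG ∖ G`, with `#I = 2 ^ (2 ^ η)`, whose principal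
left ideals `βG · x_i = {p · x_i : p ∈ βG}` are pairwise disjoint.
-/

universe u

/-- The extension to `βG` of the multiplication of a discrete semigroup `G`:
`A ∈ umul p q ↔ {s | {t | s * t ∈ A} ∈ q} ∈ p`. -/
def umul {G : Type*} [Semigroup G] (p q : Ultrafilter G) : Ultrafilter G :=
  p.bind fun s => q.map fun t => s * t

/-!
Well-order `G` in order type `#G` and choose recursively `t : G → G` whose columns
`{b * t a | b ≤ a}` are pairwise disjoint; at each stage fewer than `#G` equations `b * x = c`,
each with finitely many solutions, have to be avoided. If `u` is an ultrafilter containing all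
tails of `G` and `A ∈ u`, then every `p · t(u)` contains the union of the columns indexed by `A`,
since `g * t a` lies in the column of `a` as soon as `a ≥ g`. Hence distinct such `u` give disjoint
left ideals `βG · t(u)`. There are `2 ^ 2 ^ #G` of these ultrafilters: a map `G → G` with cofinal
fibres lifts every ultrafilter on `G` to one containing all tails, and independent families provide
`2 ^ 2 ^ #G` ultrafilters on `G`.
-/

open Cardinal Filter Function Set
open scoped Ordinal

section Ultrafilters

variable {ι X Y : Type*}

/-- Independence of a family of sets in the Boolean-algebra sense, used to prescribe the members
of an ultrafilter: every finite pattern of membership and non-membership is realised by a point. -/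
def IsIndependentFamily (P : ι → Set X) : Prop :=
  ∀ (S : Set ι) (Φ : Finset ι), ∃ x, ∀ i ∈ Φ, (x ∈ P i ↔ i ∈ S)

theorem IsIndependentFamily.comp_surjective {P : ι → Set X} (hP : IsIndependentFamily P)
    {f : Y → X} (hf : Surjective f) : IsIndependentFamily fun i => f ⁻¹' P i := by
  intro S Φ
  obtain ⟨x, hx⟩ := hP S Φ
  obtain ⟨y, rfl⟩ := hf x
  exact ⟨y, hx⟩

theorem IsIndependentFamily.exists_ultrafilter {P : ι → Set X} (hP : IsIndependentFamily P)
    (S : Set ι) : ∃ v : Ultrafilter X, ∀ i, P i ∈ v ↔ i ∈ S := by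
  choose x hx using hP S
  let Φs : Ultrafilter (Finset ι) := .of atTop
  refine ⟨Φs.map x, fun i => ?_⟩
  have eventually_iff : ∀ᶠ Φ in (Φs : Filter (Finset ι)), (x Φ ∈ P i ↔ i ∈ S) := by
    refine Ultrafilter.of_le atTop ?_
    filter_upwards [eventually_ge_atTop {i}] with Φ hΦ
    exact hx Φ i (Finset.singleton_subset_iff.1 hΦ)
  exact (eventually_congr eventually_iff).trans eventually_const

open scoped Classical in
theorem exists_finset_injOn_filter_mem (Φ : Finset (Set X)) :
    ∃ F : Finset X, InjOn (fun A : Set X => F.filter (· ∈ A)) Φ := by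
  have separates (A B : Set X) :
      ∀ᶠ F : Finset X in atTop, F.filter (· ∈ A) = F.filter (· ∈ B) → A = B := by
    by_cases hAB : A = B
    · exact .of_forall fun _ _ => hAB
    obtain ⟨k, hk⟩ : ∃ k, ¬(k ∈ A ↔ k ∈ B) := by simpa [Set.ext_iff] using hAB
    filter_upwards [eventually_ge_atTop {k}] with F hF h
    exact absurd (Finset.filter_inj'.1 h (Finset.singleton_subset_iff.1 hF)) hk
  obtain ⟨F, hF⟩ := ((eventually_all_finset Φ).2 fun A _ =>
    (eventually_all_finset Φ).2 fun B _ => separates A B).exists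
  exact ⟨F, fun A hA B hB => hF A hA B hB⟩

open scoped Classical in
theorem isIndependentFamily_filter_mem :
    IsIndependentFamily fun A : Set X =>
      {x : Finset X × Finset (Finset X) | x.1.filter (· ∈ A) ∈ x.2} := by
  intro S Φ
  obtain ⟨F, hF⟩ := exists_finset_injOn_filter_mem Φ
  refine ⟨(F, (Φ.filter (· ∈ S)).image fun A => F.filter (· ∈ A)), fun A hA => ?_⟩
  simp only [mem_ofPred_eq, Finset.mem_image, Finset.mem_filter]
  refine ⟨?_, fun hAS => ⟨A, ⟨hA, hAS⟩, rfl⟩⟩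
  rintro ⟨B, ⟨hB, hBS⟩, hBA⟩
  exact hF hB hA hBA ▸ hBS

theorem exists_isIndependentFamily (X : Type*) [Infinite X] :
    ∃ P : Set X → Set X, IsIndependentFamily P := by
  have card_eq : #X = #(Finset X × Finset (Finset X)) := by simp
  obtain ⟨e⟩ := Cardinal.eq.1 card_eq
  exact ⟨_, isIndependentFamily_filter_mem.comp_surjective e.surjective⟩

theorem exists_injective_ultrafilter (X : Type*) [Infinite X] :
    ∃ v : Set (Set X) → Ultrafilter X, Injective v := by
  obtain ⟨P, hP⟩ := exists_isIndependentFamily X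
  choose v hv using hP.exists_ultrafilter
  refine ⟨v, fun S S' h => Set.ext fun A => ?_⟩
  rw [← hv S, ← hv S', h]

theorem exists_ultrafilter_le_map_eq {l : Filter Y} {f : Y → X}
    (hf : ∀ x, ∃ᶠ y in l, f y = x) (v : Ultrafilter X) :
    ∃ u : Ultrafilter Y, (u : Filter Y) ≤ l ∧ u.map f = v := by
  have : NeBot (l ⊓ comap f v) := by
    refine inf_neBot_iff_frequently_right.2 fun {p} hp => ?_
    obtain ⟨B, hB, hBp⟩ := mem_comap.1 hp
    obtain ⟨x, hx⟩ := v.nonempty_of_mem hB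
    exact (hf x).mono fun y hy => hBp (hy ▸ hx : f y ∈ B)
  let u : Ultrafilter Y := .of (l ⊓ comap f v)
  have hu : (u : Filter Y) ≤ l ⊓ comap f v := Ultrafilter.of_le _
  exact ⟨u, hu.trans inf_le_left,
    Ultrafilter.eq_of_le (tendsto_iff_comap.2 (hu.trans inf_le_right))⟩

theorem notMem_range_pure_of_le_cofinite {u : Ultrafilter X} (hu : (u : Filter X) ≤ cofinite) :
    u ∉ range (pure : X → Ultrafilter X) := by
  rintro ⟨x, rfl⟩
  exact hu (finite_singleton x).compl_mem_cofinite rfl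

theorem exists_disjoint_mem_of_ne {u v : Ultrafilter X} (h : u ≠ v) :
    ∃ A ∈ u, ∃ B ∈ v, Disjoint A B :=
  Filter.disjoint_iff.1 (Ultrafilter.disjoint_iff_not_le.2 fun hle => h (Ultrafilter.eq_of_le hle))

end Ultrafilters

section InitialOrder

theorem exists_linearOrder_ord_eq_typeLT (X : Type*) :
    ∃ (_ : LinearOrder X) (_ : WellFoundedLT X), ord #X = typeLT X := by
  classical
  obtain ⟨r, _, hr⟩ := exists_ord_eq X
  exact ⟨linearOrderOfSTO r, ⟨IsWellFounded.wf (r := r)⟩, hr⟩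

variable {X : Type*} [LinearOrder X] [WellFoundedLT X]

theorem frequently_atTop_mem_of_le_mk [Nonempty X] (h : ord #X = typeLT X) {A : Set X}
    (hA : #X ≤ #A) : ∃ᶠ x in atTop, x ∈ A := by
  refine frequently_atTop.2 fun a => ?_
  by_contra! hlt
  have : A ⊆ Iio a := fun x hx => not_le.1 fun hax => hlt x hax hx
  exact ((mk_le_mk_of_subset this).trans_lt (mk_Iio_lt a h)).not_ge hA

variable [Infinite X]

theorem noTopOrder_of_ord_eq_typeLT (h : ord #X = typeLT X) : NoTopOrder X where
  exists_not_le a := by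
    by_contra! ha
    have := mk_Iic_lt a h (aleph0_le_mk X)
    rw [eq_univ_of_forall (s := Iic a) ha, mk_univ] at this
    exact this.false

theorem exists_forall_frequently_atTop_eq (h : ord #X = typeLT X) :
    ∃ f : X → X, ∀ x, ∃ᶠ y in atTop, f y = x := by
  obtain ⟨e⟩ := Cardinal.eq.1 (show #X = #(X × X) by simp)
  refine ⟨fun y => (e y).1, fun x => frequently_atTop_mem_of_le_mk (A := {y | (e y).1 = x}) h ?_⟩
  have inj : Injective fun z => e.symm (x, z) := e.symm.injective.comp (Prod.mk_right_injective x)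
  refine (mk_range_eq _ inj).symm.trans_le (mk_le_mk_of_subset ?_)
  rintro _ ⟨z, rfl⟩
  simp

theorem exists_injective_ultrafilter_le_atTop (h : ord #X = typeLT X) :
    ∃ u : Set (Set X) → Ultrafilter X, Injective u ∧ ∀ S, (u S : Filter X) ≤ atTop := by
  obtain ⟨v, hv⟩ := exists_injective_ultrafilter X
  obtain ⟨f, hf⟩ := exists_forall_frequently_atTop_eq h
  choose u hu huv using fun S => exists_ultrafilter_le_map_eq hf (v S)
  refine ⟨u, fun S S' hS => hv ?_, hu⟩
  rw [← huv S, ← huv S', hS]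

end InitialOrder

section Columns

/-- The part of the `a`-th column of the table of products `b * t a` that lies on or above the
diagonal, where `b ≤ a`. -/
def column {G : Type*} [Mul G] [Preorder G] (t : G → G) (a : G) : Set G :=
  image (· * t a) (Iic a)

/-- A sequence indexed by an ordered magma is thin if its columns are pairwise disjoint; an element
of the union of the columns then determines the index of its column. -/
def IsThin {G : Type*} [Mul G] [Preorder G] (t : G → G) : Prop :=
  Pairwise (Disjoint on column t)

theorem IsThin.injective {G : Type*} [Mul G] [LinearOrder G] {t : G → G} (ht : IsThin t) :
    Injective t := by
  intro a b hab
  by_contra hne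
  refine (ht hne).ne_of_mem (a := min a b * t a) (b := min a b * t b)
    ⟨_, min_le_left a b, rfl⟩ ⟨_, min_le_right a b, rfl⟩ ?_
  rw [hab]

theorem IsThin.disjoint_biUnion_column {G : Type*} [Mul G] [Preorder G] {t : G → G}
    (ht : IsThin t) {A B : Set G} (hAB : Disjoint A B) :
    Disjoint (⋃ a ∈ A, column t a) (⋃ b ∈ B, column t b) := by
  simp only [disjoint_iUnion₂_left, disjoint_iUnion₂_right]
  exact fun b hb a ha => ht (hAB.ne_of_mem ha hb)

variable {G : Type*} [Semigroup G] [Preorder G] {t : G → G}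

theorem biUnion_column_mem_umul {u : Ultrafilter G} (hu : (u : Filter G) ≤ atTop) {A : Set G}
    (hA : A ∈ u) (p : Ultrafilter G) : ⋃ a ∈ A, column t a ∈ umul p (u.map t) := by
  have eventually_mem (g : G) : ∀ᶠ a in (u : Filter G), g * t a ∈ ⋃ a ∈ A, column t a := by
    filter_upwards [hA, hu (eventually_ge_atTop g)] with a ha hga
    exact mem_biUnion ha ⟨g, hga, rfl⟩
  exact mem_bind'.2 (Eventually.of_forall eventually_mem)

theorem IsThin.disjoint_range_umul (ht : IsThin t) {u v : Ultrafilter G}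
    (hu : (u : Filter G) ≤ atTop) (hv : (v : Filter G) ≤ atTop) (huv : u ≠ v) :
    Disjoint (range fun p => umul p (u.map t)) (range fun p => umul p (v.map t)) := by
  obtain ⟨A, hA, B, hB, hAB⟩ := exists_disjoint_mem_of_ne huv
  rw [disjoint_left]
  rintro _ ⟨p, rfl⟩ ⟨q, hqp : umul q (v.map t) = umul p (u.map t)⟩
  have hpA := biUnion_column_mem_umul (t := t) hu hA p
  have hqB := biUnion_column_mem_umul (t := t) hv hB q
  rw [hqp] at hqB
  exact Ultrafilter.ne_empty_of_mem (inter_mem hpA hqB) (ht.disjoint_biUnion_column hAB).inter_eq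

end Columns

section Evasive

/-- Any fewer than `#G` equations `s * u = t` in the unknown `u` can be falsified simultaneously.
For infinite `G` this weakens the finiteness of all solution sets to what the recursive choice of a
thin sequence needs. -/
def IsLeftEvasive (G : Type*) [Mul G] : Prop :=
  ∀ E : Set (G × G), #E < #G → ∃ u, ∀ e ∈ E, e.1 * u ≠ e.2

variable {G : Type*} [Mul G]

theorem isLeftEvasive_of_finite [Infinite G] (h : ∀ s t : G, {u : G | s * u = t}.Finite) :
    IsLeftEvasive G := by
  intro E hE
  by_contra! hsol
  choose e he hsol using hsol
  obtain ⟨x, hx⟩ := exists_infinite_fiber (fun u => (⟨e u, he u⟩ : E)) hE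
  refine (infinite_coe_iff.1 hx) ((h x.1.1 x.1.2).subset ?_)
  rintro u rfl
  exact hsol u

theorem IsLeftEvasive.exists_disjoint_image_mul_right [Infinite G] (hG : IsLeftEvasive G)
    {B D : Set G} (hB : #B < #G) (hD : #D < #G) : ∃ g, Disjoint ((· * g) '' B) D := by
  have card_lt : #(B ×ˢ D : Set (G × G)) < #G := by
    rw [mk_setProd]
    exact mul_lt_of_lt (aleph0_le_mk G) hB hD
  obtain ⟨g, hg⟩ := hG _ card_lt
  refine ⟨g, disjoint_left.2 ?_⟩
  rintro _ ⟨b, hb, rfl⟩ hd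
  exact hg (b, b * g) ⟨hb, hd⟩ rfl

theorem IsLeftEvasive.exists_isThin [Infinite G] [LinearOrder G] [WellFoundedLT G]
    (hG : IsLeftEvasive G) (h : ord #G = typeLT G) : ∃ t : G → G, IsThin t := by
  have exists_next (a : G) (f : ∀ d, d < a → G) :
      ∃ g, ∀ d (hd : d < a), Disjoint ((· * f d hd) '' Iic d) ((· * g) '' Iic a) := by
    let D : Set G := range fun p : Iic a × Iio a => p.1.1 * f p.2.1 p.2.2
    have hD : #D < #G := mk_range_le.trans_lt <| by
      rw [mk_prod, lift_id, lift_id]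
      exact mul_lt_of_lt (aleph0_le_mk G) (mk_Iic_lt a h (aleph0_le_mk G)) (mk_Iio_lt a h)
    obtain ⟨g, hg⟩ := hG.exists_disjoint_image_mul_right (mk_Iic_lt a h (aleph0_le_mk G)) hD
    refine ⟨g, fun d hd => hg.symm.mono_left ?_⟩
    rintro _ ⟨c, hc, rfl⟩
    exact ⟨(⟨c, le_trans hc hd.le⟩, ⟨d, hd⟩), rfl⟩
  choose next hnext using exists_next
  refine ⟨WellFoundedLT.fix next, (pairwise_disjoint_on _).2 fun d a hd => ?_⟩
  rw [column, column, WellFoundedLT.fix_eq next a]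
  exact hnext a (fun d _ => WellFoundedLT.fix next d) d hd

end Evasive

theorem stmt13_general {G : Type u} [Semigroup G] [Infinite G] (hG : IsLeftEvasive G) :
    ∃ (I : Type u) (x : I → Ultrafilter G),
      Cardinal.mk I = (2 : Cardinal.{u}) ^ ((2 : Cardinal.{u}) ^ Cardinal.mk G) ∧
      (∀ i, x i ∉ Set.range (pure : G → Ultrafilter G)) ∧
      ∀ i j, i ≠ j →
        Disjoint (Set.range fun p => umul p (x i))
          (Set.range fun p => umul p (x j)) := by
  obtain ⟨_, _, h⟩ := exists_linearOrder_ord_eq_typeLT G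
  have := noTopOrder_of_ord_eq_typeLT h
  obtain ⟨t, ht⟩ := hG.exists_isThin h
  obtain ⟨u, hu_inj, hu⟩ := exists_injective_ultrafilter_le_atTop h
  refine ⟨Set (Set G), fun S => (u S).map t, by simp only [mk_set], fun S => ?_, fun S S' hS => ?_⟩
  · exact notMem_range_pure_of_le_cofinite
      (ht.injective.tendsto_cofinite.mono_left ((hu S).trans atTop_le_cofinite))
  · exact ht.disjoint_range_umul (hu S) (hu S') (hu_inj.ne hS)

theorem stmt13 {G : Type u} [Semigroup G] [Infinite G]
    (hwc : ∀ s t : G, {u : G | s * u = t}.Finite ∧ {u : G | u * s = t}.Finite)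
    (hrc : ∀ u v s : G, u * s = v * s → u = v)
    (η : Cardinal.{u}) (hcard : Cardinal.mk G = η) :
    ∃ (I : Type u) (x : I → Ultrafilter G),
      Cardinal.mk I = (2 : Cardinal.{u}) ^ ((2 : Cardinal.{u}) ^ η) ∧
      (∀ i, x i ∉ Set.range (pure : G → Ultrafilter G)) ∧
      ∀ i j, i ≠ j →
        Disjoint (Set.range fun p => umul p (x i))
          (Set.range fun p => umul p (x j)) := by
  subst hcard
  exact stmt13_general (isLeftEvasive_of_finite fun s t => (hwc s t).1)
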